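/- Let (X,d) be a proper geodesic metric space with a doubling Borel probability measure μ supporting a local (1,s)-Poincaré inequality for some s ≥ 1. Let 1 < q ≤ 2 and p ≥ 2 with 1/p + 1/q = 1, and consider the Hopf–Lax semigroup Q_t f(x) = inf_{y ∈ X}[ d(x,y)^p/(p·t^{p−1}) + f(y) ]. Assume (X,d,μ) satisfies the q-logarithmic Sobolev inequality with constant K > 0, and let a, ρ > 0 satisfy a^{2−q}·K^{q−1} ≥ ρ·(q−1). Then for every bounded measurable f : X → ℝ and every t ≥ 0, (∫_X e^{(a+ρt)·Q_t f} dμ)^{1/(a+ρt)} ≤ (∫_X e^{a·f} dμ)^{1/a}, where Q_0 f = f. -/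

import Mathlib

open Metric Filter NNReal ENNReal Topology MeasureTheory

/-- Hopf–Lax semigroup with Lagrangian `L(u) = u^p/p`:
`Q_t f(x) = inf_y [ d(x,y)^p/(p·t^{p−1}) + f(y) ]`, and `Q_0 f = f`. -/
noncomputable def hopfLaxP {X : Type*} [MetricSpace X] (p : ℝ) (f : X → ℝ)
    (t : ℝ) (x : X) : ℝ :=
  if t = 0 then f x else ⨅ y : X, (dist x y ^ p / (p * t ^ (p - 1)) + f y)

/-- The metric subgradient `|∇⁻ f|(x₀) = limsup_{x → x₀} [f(x₀) − f(x)]₊ / d(x,x₀)`. -/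
noncomputable def metricSubgradient {X : Type*} [MetricSpace X] (f : X → ℝ) (x₀ : X) : ℝ :=
  limsup (fun x => max (f x₀ - f x) 0 / dist x x₀) (𝓝[≠] x₀)

/-- The lower local Lipschitz number
`lip f(x) = liminf_{r→0⁺} sup_{d(x,y)<r} |f(x)−f(y)|/r`. -/
noncomputable def locLip {X : Type*} [MetricSpace X] (f : X → ℝ) (x : X) : ℝ :=
  liminf (fun r => sSup ((fun y => |f x - f y| / r) '' Metric.ball x r)) (𝓝[>] (0:ℝ))

/-- A Borel measure is doubling if open balls have positive finite measure and
`μ(B(x,2r)) ≤ c·μ(B(x,r))` for some constant `c ≥ 1`. -/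
def IsDoublingMeasure {X : Type*} [MetricSpace X] [MeasurableSpace X]
    (μ : Measure X) : Prop :=
  (∀ (x : X) (r : ℝ), 0 < r → 0 < μ (Metric.ball x r) ∧ μ (Metric.ball x r) < ⊤) ∧
  ∃ c : ℝ≥0∞, 1 ≤ c ∧ ∀ (x : X) (r : ℝ), 0 < r →
    μ (Metric.ball x (2 * r)) ≤ c * μ (Metric.ball x r)

/-- `(X,d,μ)` supports a local `(1,s)`-Poincaré inequality. -/
def LocalPoincareIneq {X : Type*} [MetricSpace X] [MeasurableSpace X]
    (μ : Measure X) (s : ℝ) : Prop :=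
  ∃ Λ : ℝ, 1 ≤ Λ ∧ ∃ C : ℝ, 0 < C ∧
    ∀ f : X → ℝ, (∃ K : ℝ≥0, LipschitzWith K f) → ∀ (x : X) (r : ℝ), 0 < r →
      (⨍ y in Metric.ball x r, |f y - ⨍ z in Metric.ball x r, f z ∂μ| ∂μ) ≤
        C * r * (⨍ y in Metric.ball x (Λ * r), (locLip f y) ^ s ∂μ) ^ (1 / s)

/-- The entropy functional `Ent_μ(h) = ∫ h log h dμ − (∫ h dμ)·log(∫ h dμ)`. -/
noncomputable def entropyFn {X : Type*} [MeasurableSpace X] (μ : Measure X)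
    (h : X → ℝ) : ℝ :=
  ∫ x, h x * Real.log (h x) ∂μ - (∫ x, h x ∂μ) * Real.log (∫ x, h x ∂μ)

/-- The `q`-logarithmic Sobolev inequality with constant `K`:
`Ent_μ(|f|^q) ≤ (q−1)·(q/K)^{q−1}·∫ |∇⁻ f|^q dμ` for all Lipschitz `f`. -/
def QLogSobolev {X : Type*} [MetricSpace X] [MeasurableSpace X]
    (μ : Measure X) (q K : ℝ) : Prop :=
  ∀ f : X → ℝ, (∃ Kf : ℝ≥0, LipschitzWith Kf f) →
    entropyFn μ (fun x => |f x| ^ q) ≤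
      (q - 1) * (q / K) ^ (q - 1) * ∫ x, (metricSubgradient f x) ^ q ∂μ

theorem aux_pow {p b c : ℝ} (hp : 2 ≤ p) (hb : 0 ≤ b) (hc : 0 ≤ c) :
    b ^ p - c ^ p ≤ p * b ^ (p - 1) * (b - c) := by
  rcases hb.eq_or_lt with rfl | hb
  · rw [Real.zero_rpow (by linarith), Real.zero_rpow (by linarith)]
    have := Real.rpow_nonneg hc p
    linarith
  · have h := one_add_mul_self_le_rpow_one_add (s := c / b - 1)
      (by have : 0 ≤ c / b := by positivity
          linarith) (p := p) (by linarith)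
    rw [show 1 + (c / b - 1) = c / b by ring, Real.div_rpow hc hb.le] at h
    have hbp : 0 < b ^ p := Real.rpow_pos_of_pos hb p
    rw [le_div_iff₀ hbp] at h
    have e : b ^ p = b ^ (p - 1) * b := by
      rw [Real.rpow_sub_one hb.ne']; field_simp
    have e2 : (1 + p * (c / b - 1)) * b ^ p = b ^ p + p * (b ^ (p - 1)) * (c - b) := by
      rw [add_mul, one_mul, mul_assoc, mul_assoc]
      congr 2
      nth_rewrite 1 [e]
      field_simp
    rw [e2] at h
    linarith

section HL
variable {X : Type*} [MetricSpace X]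

theorem hl_cost_nonneg {p t : ℝ} (hp : 2 ≤ p) (ht : 0 < t) (x y : X) :
    0 ≤ dist x y ^ p / (p * t ^ (p - 1)) := by
  have : 0 < p := by linarith
  positivity

theorem hl_bdd {p t M : ℝ} {f : X → ℝ} (hp : 2 ≤ p) (ht : 0 < t) (hM : ∀ x, |f x| ≤ M) (x : X) :
    BddBelow (Set.range fun y : X => dist x y ^ p / (p * t ^ (p - 1)) + f y) := by
  refine ⟨-M, ?_⟩
  rintro _ ⟨y, rfl⟩
  have := hl_cost_nonneg hp ht x y
  have := (abs_le.1 (hM y)).1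
  simp only
  linarith

theorem hl_le {p t M : ℝ} {f : X → ℝ} (hp : 2 ≤ p) (ht : 0 < t) (hM : ∀ x, |f x| ≤ M) (x y : X) :
    hopfLaxP p f t x ≤ dist x y ^ p / (p * t ^ (p - 1)) + f y := by
  rw [hopfLaxP, if_neg ht.ne']
  exact ciInf_le (hl_bdd hp ht hM x) y

theorem hl_le_self {p t M : ℝ} {f : X → ℝ} (hp : 2 ≤ p) (ht : 0 < t) (hM : ∀ x, |f x| ≤ M)
    (x : X) : hopfLaxP p f t x ≤ f x := by
  have := hl_le hp ht hM x x
  rw [dist_self, Real.zero_rpow (by linarith)] at this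
  simpa using this

theorem hl_ge {p t b : ℝ} {f : X → ℝ} (ht : 0 < t) (x : X)
    (h : ∀ y, b ≤ dist x y ^ p / (p * t ^ (p - 1)) + f y) : b ≤ hopfLaxP p f t x := by
  rw [hopfLaxP, if_neg ht.ne']
  have : Nonempty X := ⟨x⟩
  exact le_ciInf h

theorem hl_exists {p t b : ℝ} {f : X → ℝ} (ht : 0 < t) (x : X)
    (h : hopfLaxP p f t x < b) : ∃ y, dist x y ^ p / (p * t ^ (p - 1)) + f y < b := by
  by_contra hc
  push Not at hc
  exact absurd (hl_ge ht x hc) (not_le.2 h)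

theorem hl_abs {p t M : ℝ} {f : X → ℝ} (hp : 2 ≤ p) (ht : 0 < t) (hM : ∀ x, |f x| ≤ M)
    (x : X) : |hopfLaxP p f t x| ≤ M := by
  refine abs_le.2 ⟨?_, (hl_le_self hp ht hM x).trans (abs_le.1 (hM x)).2⟩
  refine hl_ge ht x fun y => ?_
  have := hl_cost_nonneg hp ht x y
  have := (abs_le.1 (hM y)).1
  linarith

theorem hl_cost_eq {p t : ℝ} (hp : 2 ≤ p) (ht : 0 < t) (b : ℝ) :
    b ^ p / (p * t ^ (p - 1)) = b ^ p / p * t ^ (1 - p) := by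
  rw [show 1 - p = -(p - 1) by ring, Real.rpow_neg ht.le]
  have : 0 < p := by linarith
  field_simp

theorem hl_anti {p t s M : ℝ} {f : X → ℝ} (hp : 2 ≤ p) (ht : 0 < t) (hts : t ≤ s)
    (hM : ∀ x, |f x| ≤ M) (x : X) : hopfLaxP p f s x ≤ hopfLaxP p f t x := by
  refine hl_ge ht x fun y => (hl_le hp (ht.trans_le hts) hM x y).trans ?_
  have : 0 < p := by linarith
  have := Real.rpow_le_rpow ht.le hts (z := p - 1) (by linarith)
  gcongr

theorem hl_scale {p t s M : ℝ} {f : X → ℝ} (hp : 2 ≤ p) (hs : 0 < s) (hst : s ≤ t)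
    (hM : ∀ x, |f x| ≤ M) (x : X) :
    hopfLaxP p f s x + M ≤ (t / s) ^ (p - 1) * (hopfLaxP p f t x + M) := by
  have ht := hs.trans_le hst
  have hpos : 0 < (t / s) ^ (p - 1) := by positivity
  have h1 : 1 ≤ (t / s) ^ (p - 1) :=
    Real.one_le_rpow ((one_le_div hs).2 hst) (by linarith)
  rw [← div_le_iff₀' hpos, ← sub_le_iff_le_add]
  refine hl_ge ht x fun y => ?_
  rw [sub_le_iff_le_add, div_le_iff₀' hpos]
  have h2 := hl_le hp hs hM x y
  have h3 := (abs_le.1 (hM y)).1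
  have e : (t / s) ^ (p - 1) * (dist x y ^ p / (p * t ^ (p - 1))) =
      dist x y ^ p / (p * s ^ (p - 1)) := by
    rw [Real.div_rpow ht.le hs.le]
    have : 0 < p := by linarith
    have := Real.rpow_pos_of_pos ht (p - 1)
    have := Real.rpow_pos_of_pos hs (p - 1)
    field_simp
  have h4 : 0 ≤ ((t / s) ^ (p - 1) - 1) * (f y + M) :=
    mul_nonneg (by linarith) (by linarith)
  rw [add_assoc, mul_add, e]
  linarith

theorem hl_cont {p t M : ℝ} {f : X → ℝ} (hp : 2 ≤ p) (ht : 0 < t)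
    (hM : ∀ x, |f x| ≤ M) (x : X) : ContinuousAt (fun s => hopfLaxP p f s x) t := by
  suffices h : ContinuousAt (fun s => hopfLaxP p f s x + M) t by
    have h' := h.sub (continuousAt_const (y := M))
    refine h'.congr (Eventually.of_forall fun s => ?_)
    simp
  have h0 : 0 ≤ hopfLaxP p f t x + M := by
    have := (abs_le.1 (hl_abs hp ht hM x)).1
    linarith
  have hc : ContinuousAt (fun s : ℝ => (t / s) ^ (p - 1)) t := by
    refine ContinuousAt.rpow_const ?_ (Or.inr (by linarith))
    exact continuousAt_const.div continuousAt_id ht.ne'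
  have hlow : ContinuousAt (fun s : ℝ => min 1 ((t / s) ^ (p - 1)) * (hopfLaxP p f t x + M)) t :=
    (continuousAt_const.min hc).mul continuousAt_const
  have hup : ContinuousAt (fun s : ℝ => max 1 ((t / s) ^ (p - 1)) * (hopfLaxP p f t x + M)) t :=
    (continuousAt_const.max hc).mul continuousAt_const
  unfold ContinuousAt at hlow hup ⊢
  simp only [div_self ht.ne', Real.one_rpow, min_self, max_self, one_mul] at hlow hup
  refine tendsto_of_tendsto_of_tendsto_of_le_of_le' hlow hup ?_ ?_
  · filter_upwards [lt_mem_nhds ht] with s hs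
    rcases le_total s t with h | h
    · have h1 := hl_anti hp hs h hM x
      have : min 1 ((t / s) ^ (p - 1)) ≤ 1 := min_le_left _ _
      nlinarith
    · have h1 := hl_scale hp ht h hM x
      have : min 1 ((t / s) ^ (p - 1)) ≤ (t / s) ^ (p - 1) := min_le_right _ _
      have h2 : (t / s) ^ (p - 1) * (s / t) ^ (p - 1) = 1 := by
        rw [← Real.mul_rpow (by positivity) (by positivity)]
        have : t / s * (s / t) = 1 := by field_simp
        rw [this, Real.one_rpow]
      have h3 : 0 < (t / s) ^ (p - 1) := by positivity
      calc _ ≤ (t / s) ^ (p - 1) * (hopfLaxP p f t x + M) := by gcongr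
        _ ≤ (t / s) ^ (p - 1) * ((s / t) ^ (p - 1) * (hopfLaxP p f s x + M)) := by gcongr
        _ = _ := by rw [← mul_assoc, h2, one_mul]
  · filter_upwards [lt_mem_nhds ht] with s hs
    rcases le_total s t with h | h
    · have h1 := hl_scale hp hs h hM x
      have : (t / s) ^ (p - 1) ≤ max 1 ((t / s) ^ (p - 1)) := le_max_right _ _
      nlinarith
    · have h1 := hl_anti hp ht h hM x
      have : 1 ≤ max 1 ((t / s) ^ (p - 1)) := le_max_left _ _
      nlinarith

/-- a priori bound on the distance of almost minimizers -/
theorem hl_dist_bound {p t M : ℝ} {f : X → ℝ} (hp : 2 ≤ p) (ht : 0 < t)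
    (hM : ∀ x, |f x| ≤ M) : ∃ R : ℝ, 0 ≤ R ∧ ∀ x y : X,
      dist x y ^ p / (p * t ^ (p - 1)) + f y ≤ M + 1 → dist x y ≤ R := by
  have hp0 : 0 < p := by linarith
  have htp := Real.rpow_pos_of_pos ht (p - 1)
  refine ⟨(max 0 ((2 * M + 1) * (p * t ^ (p - 1)))) ^ (p⁻¹), by positivity, fun x y h => ?_⟩
  have h3 := (abs_le.1 (hM y)).1
  have h4 : dist x y ^ p / (p * t ^ (p - 1)) ≤ 2 * M + 1 := by linarith
  rw [div_le_iff₀ (by positivity)] at h4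
  rw [Real.le_rpow_inv_iff_of_pos dist_nonneg (le_max_left _ _) hp0]
  exact h4.trans (le_max_right _ _)

theorem hl_lip {p t M : ℝ} {f : X → ℝ} (hp : 2 ≤ p) (ht : 0 < t)
    (hM : ∀ x, |f x| ≤ M) : ∃ L : ℝ, 0 ≤ L ∧ ∀ x z : X,
      hopfLaxP p f t x - hopfLaxP p f t z ≤ L * dist x z := by
  obtain ⟨R, hR0, hR⟩ := hl_dist_bound hp ht hM
  have hp0 : 0 < p := by linarith
  have htp := Real.rpow_pos_of_pos ht (p - 1)
  refine ⟨max (2 * M) ((R + 1) ^ (p - 1) / t ^ (p - 1)), ?_, fun x z => ?_⟩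
  · exact le_max_of_le_right (by positivity)
  have hx := abs_le.1 (hl_abs hp ht hM x)
  have hz := abs_le.1 (hl_abs hp ht hM z)
  have hd := dist_nonneg (x := x) (y := z)
  have hm1 := le_max_left (2 * M) ((R + 1) ^ (p - 1) / t ^ (p - 1))
  have hm2 := le_max_right (2 * M) ((R + 1) ^ (p - 1) / t ^ (p - 1))
  rcases le_total 1 (dist x z) with h1 | h1
  · nlinarith
  · refine le_of_forall_pos_le_add fun ε hε => ?_
    obtain ⟨y, hy⟩ := hl_exists (p := p) (f := f) (b := hopfLaxP p f t z + min ε 1) ht z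
      (by have : 0 < min ε 1 := lt_min hε one_pos
          linarith)
    have hmin1 := min_le_left ε 1
    have hmin2 := min_le_right ε 1
    have hzy : dist z y ≤ R := hR z y (by linarith)
    have hxy : dist x y ≤ R + 1 := by linarith [dist_triangle x z y]
    have h2 := hl_le hp ht hM x y
    have h3 := aux_pow hp (dist_nonneg (x := x) (y := y)) (dist_nonneg (x := z) (y := y))
    have h4 : dist x y - dist z y ≤ dist x z := by linarith [dist_triangle x z y]
    have h5 : dist x y ^ p - dist z y ^ p ≤ p * (R + 1) ^ (p - 1) * dist x z := by
      refine h3.trans ?_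
      have : dist x y ^ (p - 1) ≤ (R + 1) ^ (p - 1) :=
        Real.rpow_le_rpow dist_nonneg hxy (by linarith)
      have h6 : 0 ≤ p * dist x y ^ (p - 1) := by positivity
      calc _ ≤ p * dist x y ^ (p - 1) * dist x z := by gcongr
        _ ≤ _ := by gcongr
    have h6 : dist x y ^ p / (p * t ^ (p - 1)) - dist z y ^ p / (p * t ^ (p - 1)) ≤
        (R + 1) ^ (p - 1) / t ^ (p - 1) * dist x z := by
      rw [← _root_.sub_div, div_le_iff₀ (by positivity)]
      refine h5.trans (le_of_eq ?_)
      field_simp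
    have h7 := mul_le_mul_of_nonneg_right hm2 hd
    linarith

/-- Key estimate. -/
theorem hl_key {p q t M d h : ℝ} {f : X → ℝ} (hp : 2 ≤ p) (hpq : (q - 1) * (p - 1) = 1)
    (hq1 : 1 < q) (ht : 0 < t) (hh : 0 ≤ h) (hM : ∀ x, |f x| ≤ M) (hd : 0 ≤ d) (x : X)
    (hfr : ∃ᶠ z in 𝓝[≠] x, d * dist z x < hopfLaxP p f t x - hopfLaxP p f t z) :
    hopfLaxP p f (t + h) x ≤
      hopfLaxP p f t x - t ^ p / p * (t ^ (1 - p) - (t + h) ^ (1 - p)) * d ^ q := by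
  obtain ⟨R, hR0, hR⟩ := hl_dist_bound hp ht hM
  have hp0 : 0 < p := by linarith
  have htp := Real.rpow_pos_of_pos ht (p - 1)
  refine le_of_forall_pos_le_add fun ε hε => ?_
  set C := (R + 1) ^ (p - 1) / t ^ (p - 1) with hC
  have hC0 : 0 ≤ C := by positivity
  have hev : ∀ᶠ z in 𝓝[≠] x, dist z x < min 1 (ε / (C + 1)) :=
    mem_nhdsWithin_of_mem_nhds (ball_mem_nhds x (by positivity))
  obtain ⟨z, ⟨hz1, hz2⟩, hzx⟩ :=
    ((hfr.and_eventually hev).and_eventually self_mem_nhdsWithin).exists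
  have hzx' : 0 < dist z x := dist_pos.2 hzx
  have hx := abs_le.1 (hl_abs hp ht hM x)
  obtain ⟨y, hy⟩ := hl_exists (p := p) (f := f)
    (b := hopfLaxP p f t x - d * dist z x) ht z (by linarith)
  have hdz : 0 ≤ d * dist z x := by positivity
  have hzy : dist z y ≤ R := hR z y (by linarith)
  have hr1 : dist z x < 1 := hz2.trans_le (min_le_left _ _)
  have hr2 : dist z x < ε / (C + 1) := hz2.trans_le (min_le_right _ _)
  rw [lt_div_iff₀ (by positivity)] at hr2
  have htri : dist x y - dist z y ≤ dist z x := by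
    linarith [dist_triangle x z y, dist_comm x z]
  have hxy : dist x y ≤ R + 1 := by linarith
  have h3 := aux_pow hp (dist_nonneg (x := x) (y := y)) (dist_nonneg (x := z) (y := y))
  have h5 : dist x y ^ p - dist z y ^ p ≤ p * dist x y ^ (p - 1) * dist z x := by
    refine h3.trans ?_
    have h6 : 0 ≤ p * dist x y ^ (p - 1) := by positivity
    gcongr
  have h6 : dist x y ^ p / (p * t ^ (p - 1)) - dist z y ^ p / (p * t ^ (p - 1)) ≤
      dist x y ^ (p - 1) / t ^ (p - 1) * dist z x := by
    rw [← _root_.sub_div, div_le_iff₀ (by positivity)]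
    refine h5.trans (le_of_eq ?_)
    field_simp
  have h7 := hl_le hp ht hM x y
  have h8 : d < dist x y ^ (p - 1) / t ^ (p - 1) := by
    have : d * dist z x < dist x y ^ (p - 1) / t ^ (p - 1) * dist z x := by linarith
    exact lt_of_mul_lt_mul_right this hzx'.le
  have h9 : dist x y ^ (p - 1) / t ^ (p - 1) ≤ C := by
    rw [hC]
    have := Real.rpow_le_rpow (dist_nonneg (x := x) (y := y)) hxy (z := p - 1) (by linarith)
    gcongr
  have h10 : t ^ p * d ^ q ≤ dist x y ^ p := by
    rw [← Real.div_rpow dist_nonneg ht.le] at h8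
    have h11 := Real.rpow_le_rpow hd h8.le (z := q) (by linarith)
    rw [← Real.rpow_mul (by positivity), show (p - 1) * q = p by nlinarith,
      Real.div_rpow dist_nonneg ht.le, le_div_iff₀ (by positivity)] at h11
    linarith
  have h12 := hl_le hp (show 0 < t + h by linarith) hM x y
  rw [hl_cost_eq hp (by linarith)] at h12
  have h13 : dist x y ^ p / (p * t ^ (p - 1)) + f y ≤ hopfLaxP p f t x + C * dist z x := by
    have := mul_le_mul_of_nonneg_right h9 hzx'.le
    linarith
  rw [hl_cost_eq hp ht] at h13
  have h14 : 0 ≤ t ^ (1 - p) - (t + h) ^ (1 - p) :=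
    sub_nonneg.2 (Real.rpow_le_rpow_of_nonpos ht (by linarith) (by linarith))
  have h15 : t ^ p / p * (t ^ (1 - p) - (t + h) ^ (1 - p)) * d ^ q ≤
      dist x y ^ p / p * (t ^ (1 - p) - (t + h) ^ (1 - p)) := by
    have : t ^ p / p * (t ^ (1 - p) - (t + h) ^ (1 - p)) * d ^ q =
      (t ^ p * d ^ q) / p * (t ^ (1 - p) - (t + h) ^ (1 - p)) := by ring
    rw [this]
    gcongr
  nlinarith

end HL
section SG
variable {X : Type*} [MetricSpace X]

theorem sg_props {u : X → ℝ} {L : ℝ} (hL : 0 ≤ L) (hu : ∀ x z, u x - u z ≤ L * dist x z) (x : X) :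
    0 ≤ metricSubgradient u x ∧ metricSubgradient u x ≤ L ∧
    ∀ d, 0 ≤ d → d < metricSubgradient u x → ∃ᶠ z in 𝓝[≠] x, d * dist z x < u x - u z := by
  rcases eq_or_neBot (𝓝[≠] x) with h | h
  · have : metricSubgradient u x = 0 := by
      rw [metricSubgradient, h, limsup_eq]
      simp
    rw [this]
    exact ⟨le_rfl, hL, fun d h1 h2 => absurd h2 (not_lt.2 h1)⟩
  · have hb0 : ∀ z, 0 ≤ max (u x - u z) 0 / dist z x := fun z => by positivity
    have hbL : ∀ z, max (u x - u z) 0 / dist z x ≤ L := fun z => by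
      rcases (dist_nonneg (x := z) (y := x)).eq_or_lt with hz | hz
      · rw [← hz]; simpa using hL
      · rw [div_le_iff₀ hz]
        refine max_le ?_ (by positivity)
        rw [dist_comm]; exact hu x z
    have hcob : IsCoboundedUnder (· ≤ ·) (𝓝[≠] x) (fun z => max (u x - u z) 0 / dist z x) :=
      isCoboundedUnder_le_of_le _ hb0
    have hbd : IsBoundedUnder (· ≤ ·) (𝓝[≠] x) (fun z => max (u x - u z) 0 / dist z x) :=
      isBoundedUnder_of ⟨L, hbL⟩
    refine ⟨?_, ?_, fun d h1 h2 => ?_⟩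
    · exact le_limsup_of_frequently_le (Eventually.of_forall hb0).frequently hbd
    · exact limsup_le_of_le hcob (Eventually.of_forall hbL)
    · have h3 := frequently_lt_of_lt_limsup hcob h2
      refine (h3.and_eventually self_mem_nhdsWithin).mono ?_
      rintro z ⟨h4, hz⟩
      have hz' : 0 < dist z x := dist_pos.2 hz
      rw [lt_div_iff₀ hz'] at h4
      rcases lt_max_iff.1 h4 with h5 | h5
      · exact h5
      · exact absurd h5 (not_lt.2 (by positivity))

/-- Pointwise bound of the Hopf–Lax evolution through the subgradient of its exponential. -/
theorem hl_key' {p q t M l : ℝ} {f : X → ℝ} (hp : 2 ≤ p) (hpq : (q - 1) * (p - 1) = 1)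
    (hq1 : 1 < q) (ht : 0 < t) (hM : ∀ x, |f x| ≤ M) (hl : 0 < l) :
    ∃ L : ℝ≥0, LipschitzWith L (fun x => Real.exp (l * hopfLaxP p f t x)) ∧
    (∀ x, 0 ≤ metricSubgradient (fun x => Real.exp (l * hopfLaxP p f t x)) x) ∧
    (∀ x, metricSubgradient (fun x => Real.exp (l * hopfLaxP p f t x)) x ≤ L) ∧
    ∀ x, ∀ h, 0 ≤ h → hopfLaxP p f (t + h) x ≤
      hopfLaxP p f t x - t ^ p / p * (t ^ (1 - p) - (t + h) ^ (1 - p)) *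
        (metricSubgradient (fun x => Real.exp (l * hopfLaxP p f t x)) x /
          (l * Real.exp (l * hopfLaxP p f t x))) ^ q := by
  obtain ⟨L, hL0, hL⟩ := hl_lip hp ht hM
  have hexp : ∀ x z, Real.exp (l * hopfLaxP p f t x) - Real.exp (l * hopfLaxP p f t z) ≤
      Real.exp (l * hopfLaxP p f t x) * (l * (hopfLaxP p f t x - hopfLaxP p f t z)) := by
    intro x z
    have h1 := Real.add_one_le_exp (l * hopfLaxP p f t z - l * hopfLaxP p f t x)
    have h2 := Real.exp_pos (l * hopfLaxP p f t x)
    have h3 : Real.exp (l * hopfLaxP p f t z) = Real.exp (l * hopfLaxP p f t x) *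
        Real.exp (l * hopfLaxP p f t z - l * hopfLaxP p f t x) := by
      rw [← Real.exp_add]; ring_nf
    rw [h3]
    nlinarith
  set L' := Real.exp (l * M) * (l * L) with hL'
  have hL'0 : 0 ≤ L' := by positivity
  have hu : ∀ x z, Real.exp (l * hopfLaxP p f t x) - Real.exp (l * hopfLaxP p f t z) ≤
      L' * dist x z := by
    intro x z
    refine (hexp x z).trans ?_
    have h1 := (abs_le.1 (hl_abs hp ht hM x)).2
    calc _ ≤ Real.exp (l * hopfLaxP p f t x) * (l * (L * dist x z)) := by
          have := hL x z
          gcongr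
      _ ≤ Real.exp (l * M) * (l * (L * dist x z)) := by gcongr
      _ = _ := by rw [hL']; ring
  refine ⟨L'.toNNReal, ?_, fun x => (sg_props hL'0 hu x).1, fun x => ?_, fun x h hh => ?_⟩
  · refine LipschitzWith.of_dist_le_mul fun x z => ?_
    rw [Real.dist_eq, abs_le]
    have h1 := hu x z
    have h2 := hu z x
    rw [dist_comm] at h2
    rw [Real.coe_toNNReal _ hL'0]
    constructor <;> linarith
  · rw [Real.coe_toNNReal _ hL'0]
    exact (sg_props hL'0 hu x).2.1
  · obtain ⟨s0, -, s2⟩ := sg_props hL'0 hu x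
    set S := metricSubgradient (fun x => Real.exp (l * hopfLaxP p f t x)) x with hS
    have hE := Real.exp_pos (l * hopfLaxP p f t x)
    have hlE : 0 < l * Real.exp (l * hopfLaxP p f t x) := by positivity
    have key : ∀ d, 0 ≤ d → d < S / (l * Real.exp (l * hopfLaxP p f t x)) →
        hopfLaxP p f (t + h) x ≤
      hopfLaxP p f t x - t ^ p / p * (t ^ (1 - p) - (t + h) ^ (1 - p)) * d ^ q := by
      intro d hd0 hd
      refine hl_key hp hpq hq1 ht hh hM hd0 x ?_
      rw [lt_div_iff₀ hlE] at hd
      refine (s2 _ (by positivity) hd).mono fun z hz => ?_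
      have h1 := hz.trans_le (hexp x z)
      have h2 : (l * Real.exp (l * hopfLaxP p f t x)) * (d * dist z x) <
        (l * Real.exp (l * hopfLaxP p f t x)) * (hopfLaxP p f t x - hopfLaxP p f t z) := by
        linarith
      exact lt_of_mul_lt_mul_left h2 hlE.le
    have hD0 : 0 ≤ S / (l * Real.exp (l * hopfLaxP p f t x)) := by positivity
    generalize S / (l * Real.exp (l * hopfLaxP p f t x)) = D at key hD0
    rcases hD0.eq_or_lt with rfl | hD
    · rw [Real.zero_rpow (by linarith)]
      simpa using hl_anti hp ht (by linarith : t ≤ t + h) hM x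
    · have hcont : Tendsto (fun d : ℝ => hopfLaxP p f t x -
          t ^ p / p * (t ^ (1 - p) - (t + h) ^ (1 - p)) * d ^ q) (𝓝[<] D)
          (𝓝 (hopfLaxP p f t x - t ^ p / p * (t ^ (1 - p) - (t + h) ^ (1 - p)) * D ^ q)) := by
        refine Tendsto.mono_left ?_ nhdsWithin_le_nhds
        refine tendsto_const_nhds.sub (tendsto_const_nhds.mul ?_)
        exact (Real.continuousAt_rpow_const D q (Or.inr (by linarith)))
      refine ge_of_tendsto hcont ?_
      filter_upwards [self_mem_nhdsWithin,
        mem_nhdsWithin_of_mem_nhds (lt_mem_nhds hD)] with d h1 h2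
      exact key d (le_of_lt h2) h1

end SG

theorem hl_continuous {X : Type*} [MetricSpace X] {p t M : ℝ} {f : X → ℝ} (hp : 2 ≤ p)
    (ht : 0 < t) (hM : ∀ x, |f x| ≤ M) : Continuous (fun x => hopfLaxP p f t x) := by
  obtain ⟨L1, hL10, hL1⟩ := hl_lip hp ht hM
  have : LipschitzWith L1.toNNReal (fun x => hopfLaxP p f t x) := by
    refine LipschitzWith.of_dist_le_mul fun x z => ?_
    rw [Real.dist_eq, abs_le]
    have h1 := hL1 x z
    have h2 := hL1 z x
    rw [dist_comm] at h2
    rw [Real.coe_toNNReal _ hL10]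
    constructor <;> linarith
  exact this.continuous

theorem exists_W {X : Type*} [MetricSpace X] [MeasurableSpace X] [BorelSpace X]
    (μ : Measure X) [IsProbabilityMeasure μ] {p q t M K k : ℝ} {f : X → ℝ}
    (hp : 2 ≤ p) (hpq : (q - 1) * (p - 1) = 1)
    (hq1 : 1 < q) (ht : 0 < t) (hM : ∀ x, |f x| ≤ M) (hk : 0 < k) (hK : 0 < K)
    (hLSI : QLogSobolev μ q K) :
    ∃ W : X → ℝ, ∃ B : ℝ, AEStronglyMeasurable W μ ∧ (∀ x, 0 ≤ W x) ∧ (∀ x, W x ≤ B) ∧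
      (∀ x, ∀ h, 0 ≤ h → hopfLaxP p f (t + h) x ≤
        hopfLaxP p f t x - t ^ p / p * (t ^ (1 - p) - (t + h) ^ (1 - p)) * W x) ∧
      entropyFn μ (fun x => Real.exp (k * hopfLaxP p f t x)) ≤
        (q - 1) * K ^ (1 - q) * k ^ q / q * ∫ x, W x * Real.exp (k * hopfLaxP p f t x) ∂μ := by
  have hq0 : 0 < q := by linarith
  obtain ⟨L, hLip, hS0, hSL, hkey⟩ := hl_key' hp hpq hq1 ht hM (div_pos hk hq0)
  have hent := hLSI _ ⟨L, hLip⟩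
  have hpow : ∀ x, Real.exp (k / q * hopfLaxP p f t x) ^ q = Real.exp (k * hopfLaxP p f t x) := by
    intro x
    rw [← Real.exp_mul]
    congr 1
    field_simp
  have habs : (fun x => |Real.exp (k / q * hopfLaxP p f t x)| ^ q) =
      fun x => Real.exp (k * hopfLaxP p f t x) := by
    funext x
    rw [abs_of_pos (Real.exp_pos _), hpow]
  rw [habs] at hent
  have hgc := hl_continuous hp ht hM
  set S := metricSubgradient (fun x => Real.exp (k / q * hopfLaxP p f t x)) with hS
  by_cases hint : Integrable (fun x => S x ^ q) μ
  · have hWeq : ∀ x, (S x / (k / q * Real.exp (k / q * hopfLaxP p f t x))) ^ q =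
        S x ^ q * ((q / k) ^ q * Real.exp (-(k * hopfLaxP p f t x))) := by
      intro x
      have hkq : 0 < k / q := by positivity
      rw [Real.div_rpow (hS0 x) (by positivity), Real.mul_rpow hkq.le (Real.exp_pos _).le, hpow,
        Real.exp_neg, Real.div_rpow hk.le hq0.le, Real.div_rpow hq0.le hk.le]
      have := Real.rpow_pos_of_pos hk q
      have := Real.rpow_pos_of_pos hq0 q
      have := Real.exp_pos (k * hopfLaxP p f t x)
      field_simp
    refine ⟨fun x => (S x / (k / q * Real.exp (k / q * hopfLaxP p f t x))) ^ q,
      (L : ℝ) ^ q * ((q / k) ^ q * Real.exp (k * M)), ?_, ?_, ?_, hkey, ?_⟩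
    · simp only [hWeq]
      refine hint.aestronglyMeasurable.mul ?_
      exact (continuous_const.mul (Real.continuous_exp.comp
        (continuous_const.mul hgc).neg)).aestronglyMeasurable
    · intro x
      have := hS0 x
      positivity
    · intro x
      simp only [hWeq]
      have h1 := hS0 x
      have h2 := hSL x
      have h3 := (abs_le.1 (hl_abs hp ht hM x)).1
      have h4 : -(k * hopfLaxP p f t x) ≤ k * M := by nlinarith
      gcongr
    · refine hent.trans (le_of_eq ?_)
      have h1 : ∀ x, (S x / (k / q * Real.exp (k / q * hopfLaxP p f t x))) ^ q *
          Real.exp (k * hopfLaxP p f t x) = (q / k) ^ q * S x ^ q := by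
        intro x
        rw [hWeq, Real.exp_neg]
        have := Real.exp_pos (k * hopfLaxP p f t x)
        field_simp
      simp only [h1]
      rw [integral_const_mul, ← mul_assoc]
      congr 1
      rw [Real.div_rpow hq0.le hK.le, Real.div_rpow hq0.le hk.le, Real.rpow_sub_one hq0.ne',
        show 1 - q = -(q - 1) by ring, Real.rpow_neg hK.le]
      have := Real.rpow_pos_of_pos hk q
      have := Real.rpow_pos_of_pos hq0 q
      have := Real.rpow_pos_of_pos hK (q - 1)
      field_simp
  · refine ⟨fun _ => 0, 0, aestronglyMeasurable_const, fun _ => le_rfl, fun _ => le_rfl, ?_, ?_⟩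
    · intro x h hh
      simpa using hl_anti hp ht (by linarith : t ≤ t + h) hM x
    · rw [integral_undef hint] at hent
      simpa using hent

theorem phi_deriv {X : Type*} [MeasurableSpace X]
    (μ : Measure X) [IsProbabilityMeasure μ] {g W : X → ℝ} {M B C δ k ρ : ℝ} {c c' : ℝ → ℝ}
    (hgm : AEStronglyMeasurable g μ) (hg : ∀ x, |g x| ≤ M) (hWm : AEStronglyMeasurable W μ)
    (hW0 : ∀ x, 0 ≤ W x) (hWB : ∀ x, W x ≤ B) (hδ : 0 < δ)
    (hc : ∀ h ∈ Metric.ball (0 : ℝ) δ, HasDerivAt c (c' h) h)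
    (hc1 : ∀ h ∈ Metric.ball (0 : ℝ) δ, |c h| ≤ 1)
    (hc2 : ∀ h ∈ Metric.ball (0 : ℝ) δ, |c' h| ≤ C) (hc0 : c 0 = 0) :
    HasDerivAt (fun h => ∫ x, Real.exp ((k + ρ * h) * (g x - c h * W x)) ∂μ)
      (∫ x, (ρ * g x - k * c' 0 * W x) * Real.exp (k * g x) ∂μ) 0 := by
  have hm : ∀ h, AEStronglyMeasurable
      (fun x => Real.exp ((k + ρ * h) * (g x - c h * W x))) μ := fun h =>
    Real.continuous_exp.comp_aestronglyMeasurable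
      ((hgm.sub (hWm.const_mul (c h))).const_mul (k + ρ * h))
  have hM : ∀ x : X, 0 ≤ M := fun x => (abs_nonneg _).trans (hg x)
  have hex : ∀ x, ∀ h ∈ Metric.ball (0 : ℝ) δ, |(k + ρ * h) * (g x - c h * W x)| ≤
      (|k| + |ρ| * δ) * (M + B) := by
    intro x h hh
    have hhd : |h| ≤ δ := by
      have := Metric.mem_ball.1 hh
      rw [Real.dist_eq, sub_zero] at this
      exact this.le
    rw [abs_mul]
    have h1 : |k + ρ * h| ≤ |k| + |ρ| * δ := by
      refine (abs_add_le _ _).trans ?_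
      rw [abs_mul]
      gcongr
    have h2 : |g x - c h * W x| ≤ M + B := by
      refine (abs_sub _ _).trans ?_
      rw [abs_mul, abs_of_nonneg (hW0 x)]
      have h3 := hg x
      have h4 : |c h| * W x ≤ 1 * B :=
        mul_le_mul (hc1 h hh) (hWB x) (hW0 x) zero_le_one
      linarith
    gcongr
  have hC0 : 0 ≤ C := (abs_nonneg _).trans (hc2 0 (Metric.mem_ball_self hδ))
  have key := hasDerivAt_integral_of_dominated_loc_of_deriv_le (μ := μ) (𝕜 := ℝ) (E := ℝ)
    (F := fun h x => Real.exp ((k + ρ * h) * (g x - c h * W x)))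
    (F' := fun h x => Real.exp ((k + ρ * h) * (g x - c h * W x)) *
      (ρ * (g x - c h * W x) + (k + ρ * h) * (-(c' h * W x))))
    (x₀ := (0 : ℝ)) (s := Metric.ball 0 δ)
    (bound := fun _ => Real.exp ((|k| + |ρ| * δ) * (M + B)) *
      (|ρ| * (M + B) + (|k| + |ρ| * δ) * (C * B)))
    (Metric.ball_mem_nhds 0 hδ) (Eventually.of_forall hm) ?_ ?_ ?_ (integrable_const _) ?_
  · refine key.2.congr_deriv ?_
    congr 1
    funext x
    simp only [hc0, mul_zero, add_zero, zero_mul, sub_zero]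
    ring
  · refine Integrable.of_bound (hm 0) (Real.exp ((|k| + |ρ| * δ) * (M + B)))
      (Eventually.of_forall fun x => ?_)
    rw [Real.norm_eq_abs, abs_of_pos (Real.exp_pos _)]
    exact Real.exp_le_exp.2 ((le_abs_self _).trans (hex x 0 (Metric.mem_ball_self hδ)))
  · refine (hm 0).mul ?_
    exact ((hgm.sub (hWm.const_mul _)).const_mul _).add ((hWm.const_mul _).neg.const_mul _)
  · refine Eventually.of_forall fun x h hh => ?_
    have hhd : |h| ≤ δ := by
      have := Metric.mem_ball.1 hh
      rw [Real.dist_eq, sub_zero] at this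
      exact this.le
    have hB : 0 ≤ B := (hW0 x).trans (hWB x)
    rw [Real.norm_eq_abs, abs_mul, abs_of_pos (Real.exp_pos _)]
    refine mul_le_mul (Real.exp_le_exp.2 ((le_abs_self _).trans (hex x h hh))) ?_
      (abs_nonneg _) (Real.exp_pos _).le
    refine (abs_add_le _ _).trans ?_
    rw [abs_mul, abs_mul, abs_neg, abs_mul, abs_of_nonneg (hW0 x)]
    have h1 : |k + ρ * h| ≤ |k| + |ρ| * δ := by
      refine (abs_add_le _ _).trans ?_
      rw [abs_mul]
      gcongr
    have h2 : |g x - c h * W x| ≤ M + B := by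
      refine (abs_sub _ _).trans ?_
      rw [abs_mul, abs_of_nonneg (hW0 x)]
      have h3 := hg x
      have h4 : |c h| * W x ≤ 1 * B :=
        mul_le_mul (hc1 h hh) (hWB x) (hW0 x) zero_le_one
      linarith
    have h3 := hc2 h hh
    have h4 := hWB x
    have h5 := hW0 x
    gcongr
  · refine Eventually.of_forall fun x h hh => ?_
    have h1 : HasDerivAt (fun h => k + ρ * h) ρ h := by
      simpa using ((hasDerivAt_id h).const_mul ρ).const_add k
    have h2 : HasDerivAt (fun h => g x - c h * W x) (-(c' h * W x)) h :=
      ((hc h hh).mul_const (W x)).const_sub (g x)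
    exact (h1.mul h2).exp

/-- The auxiliary time profile and its properties. -/
theorem c_props {p q t : ℝ} (hp : 2 ≤ p) (hpq : (q - 1) * (p - 1) = 1) (hq1 : 1 < q)
    (ht : 0 < t) : ∃ c' : ℝ → ℝ, ∃ δ > 0, ∃ C, c' 0 = 1 / q ∧
    (∀ h ∈ Metric.ball (0 : ℝ) δ, HasDerivAt
      (fun h => t ^ p / p * (t ^ (1 - p) - (t + h) ^ (1 - p))) (c' h) h) ∧
    (∀ h ∈ Metric.ball (0 : ℝ) δ, |t ^ p / p * (t ^ (1 - p) - (t + h) ^ (1 - p))| ≤ 1) ∧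
    (∀ h ∈ Metric.ball (0 : ℝ) δ, |c' h| ≤ C) := by
  have hp0 : 0 < p := by linarith
  set c' : ℝ → ℝ := fun h => t ^ p / p * (-(1 * (1 - p) * (t + h) ^ (1 - p - 1))) with hc'
  have hd : ∀ h, 0 < t + h → HasDerivAt
      (fun h => t ^ p / p * (t ^ (1 - p) - (t + h) ^ (1 - p))) (c' h) h := by
    intro h hh
    have h1 : HasDerivAt (fun h => t + h) 1 h := (hasDerivAt_id h).const_add t
    exact ((h1.rpow_const (p := 1 - p) (Or.inl hh.ne')).const_sub _).const_mul _
  have hcc : ContinuousAt c' 0 := by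
    have : ContinuousAt (fun h : ℝ => (t + h) ^ (1 - p - 1)) 0 := by
      refine ContinuousAt.rpow_const (by fun_prop) (Or.inl ?_)
      simpa using ht.ne'
    exact continuousAt_const.mul (continuousAt_const.mul this).neg
  have hc := (hd 0 (by simpa using ht)).continuousAt
  have e1 : ∀ᶠ h in 𝓝 (0 : ℝ), |c' h| < |c' 0| + 1 :=
    hcc.abs.eventually_lt continuousAt_const (by linarith)
  have e2 : ∀ᶠ h in 𝓝 (0 : ℝ), |t ^ p / p * (t ^ (1 - p) - (t + h) ^ (1 - p))| < 1 :=
    hc.abs.eventually_lt continuousAt_const (by simp)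
  have e3 : ∀ᶠ h in 𝓝 (0 : ℝ), 0 < t + h := by
    filter_upwards [lt_mem_nhds (show -t < 0 by linarith)] with h hh
    linarith
  obtain ⟨δ, hδ, hball⟩ := Metric.eventually_nhds_iff_ball.1 ((e1.and e2).and e3)
  refine ⟨c', δ, hδ, |c' 0| + 1, ?_, fun h hh => hd h (hball h hh).2,
    fun h hh => (hball h hh).1.2.le, fun h hh => (hball h hh).1.1.le⟩
  simp only [hc', add_zero]
  rw [show 1 - p - 1 = -p by ring, Real.rpow_neg ht.le]
  have := Real.rpow_pos_of_pos ht p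
  field_simp
  nlinarith

/-- Upper right Dini derivative bound. -/
theorem slope_bound {X : Type*} [MetricSpace X] [MeasurableSpace X] [BorelSpace X]
    (μ : Measure X) [IsProbabilityMeasure μ] {p q t M K a ρ r : ℝ} {f : X → ℝ}
    (hp : 2 ≤ p) (hpq : (q - 1) * (p - 1) = 1)
    (hq1 : 1 < q) (hq2 : q ≤ 2) (ht : 0 < t) (hM : ∀ x, |f x| ≤ M) (ha : 0 < a) (hρ : 0 < ρ)
    (hK : 0 < K)
    (hLSI : QLogSobolev μ q K) (hconst : ρ * (q - 1) ≤ a ^ (2 - q) * K ^ (q - 1)) (hr : 0 < r) :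
    ∀ᶠ z in 𝓝[>] t, slope (fun s => Real.log (∫ x, Real.exp ((a + ρ * s) * hopfLaxP p f s x) ∂μ)
      / (a + ρ * s)) t z < r := by
  have hq0 : 0 < q := by linarith
  set k := a + ρ * t with hk
  have hka : a ≤ k := by have : 0 < ρ * t := by positivity
                         linarith
  have hk0 : 0 < k := by linarith
  obtain ⟨W, B, hWm, hW0, hWB, hWkey, hWent⟩ := exists_W μ hp hpq hq1 ht hM hk0 hK hLSI
  obtain ⟨c', δ, hδ, C, hc'0, hcd, hc1, hc2⟩ := c_props hp hpq hq1 ht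
  set g : X → ℝ := fun x => hopfLaxP p f t x with hg
  have hgc : Continuous g := hl_continuous hp ht hM
  have hgM : ∀ x, |g x| ≤ M := fun x => hl_abs hp ht hM x
  set c : ℝ → ℝ := fun h => t ^ p / p * (t ^ (1 - p) - (t + h) ^ (1 - p)) with hcdef
  have hc0 : c 0 = 0 := by simp [hcdef]
  have hΦ := phi_deriv μ (k := k) (ρ := ρ) hgc.aestronglyMeasurable hgM hWm hW0 hWB hδ
    hcd hc1 hc2 hc0
  set Φ : ℝ → ℝ := fun h => ∫ x, Real.exp ((k + ρ * h) * (g x - c h * W x)) ∂μ with hΦdef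
  have hΦ0 : Φ 0 = ∫ x, Real.exp (k * g x) ∂μ := by
    simp [hΦdef, hc0]
  have hintb : ∀ {u : X → ℝ} {D : ℝ}, AEStronglyMeasurable u μ → (∀ x, |u x| ≤ D) →
      Integrable u μ := fun hu hD =>
    Integrable.of_bound hu _ (Eventually.of_forall hD)
  have hEm : AEStronglyMeasurable (fun x => Real.exp (k * g x)) μ :=
    (Real.continuous_exp.comp (continuous_const.mul hgc)).aestronglyMeasurable
  have hEb : ∀ x, |Real.exp (k * g x)| ≤ Real.exp (k * M) := by
    intro x
    rw [abs_of_pos (Real.exp_pos _)]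
    have := (abs_le.1 (hgM x)).2
    gcongr
  have hEi := hintb hEm hEb
  have hFpos : 0 < ∫ x, Real.exp (k * g x) ∂μ := integral_exp_pos hEi
  have hgE : Integrable (fun x => g x * Real.exp (k * g x)) μ := by
    refine hintb (hgc.aestronglyMeasurable.mul hEm) (D := M * Real.exp (k * M)) fun x => ?_
    rw [abs_mul]
    exact mul_le_mul (hgM x) (hEb x) (abs_nonneg _) ((abs_nonneg _).trans (hgM x))
  have hWE : Integrable (fun x => W x * Real.exp (k * g x)) μ := by
    refine hintb (hWm.mul hEm) (D := B * Real.exp (k * M)) fun x => ?_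
    rw [abs_mul, abs_of_nonneg (hW0 x)]
    exact mul_le_mul (hWB x) (hEb x) (abs_nonneg _) ((hW0 x).trans (hWB x))
  have hderiv : ∫ x, (ρ * g x - k * c' 0 * W x) * Real.exp (k * g x) ∂μ =
      ρ * ∫ x, g x * Real.exp (k * g x) ∂μ - k / q * ∫ x, W x * Real.exp (k * g x) ∂μ := by
    rw [← integral_const_mul, ← integral_const_mul, ← integral_sub (hgE.const_mul _)
      (hWE.const_mul _)]
    refine integral_congr_ae (Eventually.of_forall fun x => ?_)
    simp only [hc'0]
    ring
  have hentEq : entropyFn μ (fun x => Real.exp (k * g x)) =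
      k * ∫ x, g x * Real.exp (k * g x) ∂μ - Φ 0 * Real.log (Φ 0) := by
    rw [entropyFn, hΦ0, ← integral_const_mul]
    congr 1
    refine integral_congr_ae (Eventually.of_forall fun x => ?_)
    simp only [Real.log_exp]
    ring
  rw [hderiv] at hΦ
  have hden : HasDerivAt (fun h => k + ρ * h) ρ 0 := by
    simpa using ((hasDerivAt_id (0 : ℝ)).const_mul ρ).const_add k
  have hΦpos : 0 < Φ 0 := hΦ0 ▸ hFpos
  have hH := (hΦ.log hΦpos.ne').div hden (by simpa using hk0.ne')
  set I1 := ∫ x, g x * Real.exp (k * g x) ∂μ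
  set I2 := ∫ x, W x * Real.exp (k * g x) ∂μ with hI2
  have hI20 : 0 ≤ I2 := integral_nonneg fun x => mul_nonneg (hW0 x) (Real.exp_pos _).le
  have hcoef : ρ * ((q - 1) * K ^ (1 - q) * k ^ q) ≤ k ^ 2 := by
    have h1 : a ^ (2 - q) ≤ k ^ (2 - q) := Real.rpow_le_rpow ha.le hka (by linarith)
    have h2 : ρ * (q - 1) ≤ k ^ (2 - q) * K ^ (q - 1) :=
      hconst.trans (by gcongr)
    have h3 : K ^ (q - 1) * K ^ (1 - q) = 1 := by
      rw [← Real.rpow_add hK]; simp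
    have h4 : k ^ (2 - q) * k ^ q = k ^ 2 := by
      rw [← Real.rpow_add hk0]; simp
    calc ρ * ((q - 1) * K ^ (1 - q) * k ^ q) = (ρ * (q - 1)) * (K ^ (1 - q) * k ^ q) := by ring
      _ ≤ (k ^ (2 - q) * K ^ (q - 1)) * (K ^ (1 - q) * k ^ q) := by gcongr
      _ = (k ^ (2 - q) * k ^ q) * (K ^ (q - 1) * K ^ (1 - q)) := by ring
      _ = k ^ 2 := by rw [h3, h4, mul_one]
  have hmain : k * (ρ * I1 - k / q * I2) - ρ * (Φ 0 * Real.log (Φ 0)) ≤ 0 := by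
    rw [hentEq] at hWent
    have h1 := mul_le_mul_of_nonneg_left hWent hρ.le
    have h2 := mul_le_mul_of_nonneg_right hcoef (div_nonneg hI20 hq0.le)
    have h3 : ρ * ((q - 1) * K ^ (1 - q) * k ^ q / q * I2) =
      ρ * ((q - 1) * K ^ (1 - q) * k ^ q) * (I2 / q) := by ring
    have h4 : k * (k / q * I2) = k ^ 2 * (I2 / q) := by ring
    rw [mul_sub k, h4]
    linarith
  set H' := ((ρ * I1 - k / q * I2) / Φ 0 * (k + ρ * 0) - Real.log (Φ 0) * ρ) / (k + ρ * 0) ^ 2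
    with hH'
  have hH'le : H' ≤ 0 := by
    rw [hH', mul_zero, add_zero]
    refine div_nonpos_of_nonpos_of_nonneg ?_ (by positivity)
    have : (ρ * I1 - k / q * I2) / Φ 0 * k - Real.log (Φ 0) * ρ =
      (k * (ρ * I1 - k / q * I2) - ρ * (Φ 0 * Real.log (Φ 0))) / Φ 0 := by
      field_simp
    rw [this]
    exact div_nonpos_of_nonpos_of_nonneg hmain hΦpos.le
  have hslope : ∀ᶠ h in 𝓝[>] (0 : ℝ),
      slope (fun h => Real.log (Φ h) / (k + ρ * h)) 0 h < r := by
    have h1 := hasDerivAt_iff_tendsto_slope.1 hH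
    have h2 : Tendsto (slope (fun h => Real.log (Φ h) / (k + ρ * h)) 0) (𝓝[>] 0) (𝓝 H') :=
      h1.mono_left (nhdsWithin_mono _ fun x hx => ne_of_gt hx)
    exact h2.eventually (gt_mem_nhds (by linarith))
  have hmap : Tendsto (fun z => z - t) (𝓝[>] t) (𝓝[>] 0) := by
    refine tendsto_nhdsWithin_iff.2 ⟨?_, ?_⟩
    · have : Tendsto (fun z : ℝ => z - t) (𝓝 t) (𝓝 (t - t)) :=
        (continuous_id.sub continuous_const).tendsto t
      rw [sub_self] at this
      exact this.mono_left nhdsWithin_le_nhds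
    · filter_upwards [self_mem_nhdsWithin] with z hz
      exact _root_.sub_pos.2 (show t < z from hz)
  have hsmall : ∀ᶠ h in 𝓝[>] (0 : ℝ), h ∈ Metric.ball (0 : ℝ) δ :=
    mem_nhdsWithin_of_mem_nhds (Metric.ball_mem_nhds 0 hδ)
  filter_upwards [hmap.eventually hslope, hmap.eventually hsmall, self_mem_nhdsWithin]
    with z hz1 hz2 hz3
  have hz3' : t < z := hz3
  obtain ⟨h, rfl⟩ : ∃ h, z = t + h := ⟨z - t, by ring⟩
  have hh : 0 < h := by linarith
  rw [add_sub_cancel_left] at hz1 hz2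
  refine lt_of_le_of_lt ?_ hz1
  have hth : 0 < t + h := by linarith
  have hkk : a + ρ * (t + h) = k + ρ * h := by rw [hk]; ring
  have hkh : 0 < k + ρ * h := by positivity
  have hQc : Continuous (fun x => hopfLaxP p f (t + h) x) := hl_continuous hp hth hM
  have hi1 : Integrable (fun x => Real.exp ((k + ρ * h) * hopfLaxP p f (t + h) x)) μ := by
    refine hintb (Real.continuous_exp.comp (continuous_const.mul hQc)).aestronglyMeasurable
      (D := Real.exp ((k + ρ * h) * M)) fun x => ?_
    rw [abs_of_pos (Real.exp_pos _)]
    have := (abs_le.1 (hl_abs hp hth hM x)).2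
    gcongr
  have hcnn : 0 ≤ c h := by
    have h14 : 0 ≤ t ^ (1 - p) - (t + h) ^ (1 - p) :=
      sub_nonneg.2 (Real.rpow_le_rpow_of_nonpos ht (by linarith) (by linarith))
    have : 0 < p := by linarith
    simp only [hcdef]
    positivity
  have hi2 : Integrable (fun x => Real.exp ((k + ρ * h) * (g x - c h * W x))) μ := by
    refine hintb (Real.continuous_exp.comp_aestronglyMeasurable
      ((hgc.aestronglyMeasurable.sub (hWm.const_mul (c h))).const_mul (k + ρ * h)))
      (D := Real.exp ((k + ρ * h) * M)) fun x => ?_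
    rw [abs_of_pos (Real.exp_pos _)]
    have h1 := (abs_le.1 (hgM x)).2
    have h2 := mul_nonneg hcnn (hW0 x)
    have h3 : g x - c h * W x ≤ M := by linarith
    gcongr
  have hle : ∫ x, Real.exp ((k + ρ * h) * hopfLaxP p f (t + h) x) ∂μ ≤ Φ h := by
    refine integral_mono hi1 hi2 fun x => ?_
    have := hWkey x h hh.le
    simp only [hg, hcdef]
    gcongr
  have hlog : Real.log (∫ x, Real.exp ((k + ρ * h) * hopfLaxP p f (t + h) x) ∂μ)
      ≤ Real.log (Φ h) := Real.log_le_log (integral_exp_pos hi1) hle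
  rw [slope_def_field, slope_def_field]
  simp only [hkk, add_sub_cancel_left, sub_zero, mul_zero, add_zero, hΦ0]
  rw [← hk]
  gcongr

theorem G_cont {X : Type*} [MetricSpace X] [MeasurableSpace X] [BorelSpace X]
    (μ : Measure X) [IsProbabilityMeasure μ] {p t M a ρ : ℝ} {f : X → ℝ}
    (hp : 2 ≤ p) (ht : 0 < t) (hM : ∀ x, |f x| ≤ M) (ha : 0 < a) (hρ : 0 < ρ) :
    ContinuousAt (fun s => Real.log (∫ x, Real.exp ((a + ρ * s) * hopfLaxP p f s x) ∂μ)
      / (a + ρ * s)) t := by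
  have hk : 0 < a + ρ * t := by positivity
  have hb : ∀ s, 0 < s → ∀ x, |Real.exp ((a + ρ * s) * hopfLaxP p f s x)| ≤
      Real.exp ((a + ρ * s) * M) := by
    intro s hs x
    rw [abs_of_pos (Real.exp_pos _)]
    have := (abs_le.1 (hl_abs hp hs hM x)).2
    gcongr
  have hm : ∀ s, 0 < s → AEStronglyMeasurable
      (fun x => Real.exp ((a + ρ * s) * hopfLaxP p f s x)) μ := fun s hs =>
    (Real.continuous_exp.comp (continuous_const.mul (hl_continuous hp hs hM))).aestronglyMeasurable
  have hpos : 0 < ∫ x, Real.exp ((a + ρ * t) * hopfLaxP p f t x) ∂μ :=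
    integral_exp_pos (Integrable.of_bound (hm t ht) _ (Eventually.of_forall (hb t ht)))
  refine ContinuousAt.div (ContinuousAt.log ?_ hpos.ne') (by fun_prop) hk.ne'
  refine continuousAt_of_dominated (bound := fun _ => Real.exp ((a + ρ * (t + 1)) * |M|)) ?_ ?_
    (integrable_const _) ?_
  · filter_upwards [lt_mem_nhds ht] with s hs using hm s hs
  · filter_upwards [lt_mem_nhds ht, gt_mem_nhds (lt_add_one t)] with s hs hs1
    refine Eventually.of_forall fun x => (hb s hs x).trans ?_
    have := le_abs_self M
    have h0 := abs_nonneg M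
    refine Real.exp_le_exp.2 ?_
    calc (a + ρ * s) * M ≤ (a + ρ * s) * |M| := by gcongr
      _ ≤ _ := by gcongr
  · refine Eventually.of_forall fun x => ?_
    have h1 := hl_cont hp ht hM x
    have h2 : ContinuousAt (fun s : ℝ => a + ρ * s) t := by fun_prop
    exact Real.continuous_exp.continuousAt.comp (h2.mul h1)

/-- The `q`-log-Sobolev inequality implies hypercontractivity of the
Hamilton–Jacobi (Hopf–Lax) semigroup. -/
theorem qLSI_implies_hypercontractivity
    {X : Type*} [MetricSpace X] [ProperSpace X] [Nonempty X]
    [MeasurableSpace X] [BorelSpace X]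
    (hgeo : ∀ x y : X, ∀ τ : ℝ, 0 ≤ τ → τ ≤ 1 →
      ∃ z : X, dist x z = τ * dist x y ∧ dist z y = (1 - τ) * dist x y)
    (μ : Measure X) [IsProbabilityMeasure μ]
    (hdoub : IsDoublingMeasure μ)
    (s : ℝ) (hs : 1 ≤ s) (hpoin : LocalPoincareIneq μ s)
    (p q : ℝ) (hq1 : 1 < q) (hq2 : q ≤ 2) (hp : 2 ≤ p) (hpq : 1 / p + 1 / q = 1)
    (K : ℝ) (hK : 0 < K) (hLSI : QLogSobolev μ q K)
    (a ρ : ℝ) (ha : 0 < a) (hρ : 0 < ρ)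
    (hconst : ρ * (q - 1) ≤ a ^ (2 - q) * K ^ (q - 1)) :
    ∀ f : X → ℝ, Measurable f → (∃ M : ℝ, ∀ x, |f x| ≤ M) → ∀ t : ℝ, 0 ≤ t →
      (∫ x, Real.exp ((a + ρ * t) * hopfLaxP p f t x) ∂μ) ^ (1 / (a + ρ * t)) ≤
        (∫ x, Real.exp (a * f x) ∂μ) ^ (1 / a) := by
  intro f hf hfb t ht
  obtain ⟨M, hM⟩ := hfb
  have hq0 : 0 < q := by linarith
  have hp0 : 0 < p := by linarith
  have hpq' : (q - 1) * (p - 1) = 1 := by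
    field_simp at hpq
    linarith
  rcases ht.eq_or_lt with rfl | ht
  · simp [hopfLaxP]
  set G : ℝ → ℝ := fun s => Real.log (∫ x, Real.exp ((a + ρ * s) * hopfLaxP p f s x) ∂μ)
      / (a + ρ * s) with hG
  have hFpos : ∀ s, 0 < s →
      Integrable (fun x => Real.exp ((a + ρ * s) * hopfLaxP p f s x)) μ := by
    intro s hs
    refine Integrable.of_bound (Real.continuous_exp.comp (continuous_const.mul
      (hl_continuous hp hs hM))).aestronglyMeasurable (Real.exp ((a + ρ * s) * M))
      (Eventually.of_forall fun x => ?_)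
    rw [Real.norm_eq_abs, abs_of_pos (Real.exp_pos _)]
    have := (abs_le.1 (hl_abs hp hs hM x)).2
    gcongr
  have hfi : ∀ k : ℝ, Integrable (fun x => Real.exp (k * f x)) μ := by
    intro k
    refine Integrable.of_bound (Real.measurable_exp.comp
      (hf.const_mul k)).aestronglyMeasurable (Real.exp (|k| * M))
      (Eventually.of_forall fun x => ?_)
    rw [Real.norm_eq_abs, abs_of_pos (Real.exp_pos _)]
    refine Real.exp_le_exp.2 ((le_abs_self _).trans ?_)
    rw [abs_mul]
    have := hM x
    gcongr
  have hmono : ∀ s, 0 < s → s ≤ t → G t ≤ G s := by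
    intro s hs hst
    have := image_le_of_liminf_slope_right_le_deriv_boundary (f := G) (a := s) (b := t)
      (B := fun _ => G s) (B' := fun _ => 0)
      (fun u hu => (G_cont μ hp (hs.trans_le hu.1) hM ha hρ).continuousWithinAt) le_rfl
      continuousOn_const (fun u _ => hasDerivWithinAt_const _ _ _)
      (fun u hu r hr => (slope_bound μ hp hpq' hq1 hq2 (hs.trans_le hu.1) hM ha hρ hK hLSI
        hconst hr).frequently)
    exact this (Set.right_mem_Icc.2 hst)
  have hG2 : ∀ s, 0 < s → s ≤ t →
      G t ≤ Real.log (∫ x, Real.exp ((a + ρ * s) * f x) ∂μ) / (a + ρ * s) := by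
    intro s hs hst
    refine (hmono s hs hst).trans ?_
    have h1 : ∫ x, Real.exp ((a + ρ * s) * hopfLaxP p f s x) ∂μ ≤
        ∫ x, Real.exp ((a + ρ * s) * f x) ∂μ := by
      refine integral_mono (hFpos s hs) (hfi _) fun x => ?_
      have := hl_le_self hp hs hM x
      simp only
      gcongr
    have h2 := Real.log_le_log (integral_exp_pos (hFpos s hs)) h1
    simp only [hG]
    gcongr
  have hlim : ContinuousAt
      (fun s => Real.log (∫ x, Real.exp ((a + ρ * s) * f x) ∂μ) / (a + ρ * s)) 0 := by
    refine ContinuousAt.div (ContinuousAt.log ?_ (integral_exp_pos (hfi _)).ne') (by fun_prop)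
      (by simpa using ha.ne')
    refine continuousAt_of_dominated (bound := fun _ => Real.exp ((a + ρ * 1) * |M|)) ?_ ?_
      (integrable_const _) ?_
    · exact Eventually.of_forall fun s => (hfi _).aestronglyMeasurable
    · filter_upwards [Metric.ball_mem_nhds (0 : ℝ) one_pos] with s hs
      have hs' : |s| < 1 := by simpa [Real.dist_eq] using hs
      refine Eventually.of_forall fun x => ?_
      rw [Real.norm_eq_abs, abs_of_pos (Real.exp_pos _)]
      refine Real.exp_le_exp.2 ((le_abs_self _).trans ?_)
      rw [abs_mul]
      have h1 : |a + ρ * s| ≤ a + ρ * 1 := by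
        refine (abs_add_le _ _).trans ?_
        rw [abs_mul, abs_of_pos ha, abs_of_pos hρ]
        gcongr
      have h2 : |f x| ≤ |M| := (hM x).trans (le_abs_self M)
      gcongr
    · refine Eventually.of_forall fun x => ?_
      fun_prop
  have hfin : G t ≤ Real.log (∫ x, Real.exp (a * f x) ∂μ) / a := by
    have h1 := hlim.tendsto.mono_left (nhdsWithin_le_nhds (s := Set.Ioi 0))
    simp only [mul_zero, add_zero] at h1
    refine ge_of_tendsto h1 ?_
    filter_upwards [Ioc_mem_nhdsGT ht] with s hs
    exact hG2 s hs.1 hs.2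
  rw [Real.rpow_def_of_pos (integral_exp_pos (hFpos t ht)),
    Real.rpow_def_of_pos (integral_exp_pos (hfi a)), Real.exp_le_exp, mul_one_div, mul_one_div]
  exact hfin
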